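/- Let G = ⟨a, b; r⟩ be a two-generator group with infinite abelianization and only finitely many Nielsen equivalence classes of generating pairs in the T-system of (a,b). Then Out(G) is residually finite; moreover, if r is not contained in F(a,b)′ then Out(G) is virtually cyclic. -/

import Mathlib

def innAut (G : Type*) [Group G] : Subgroup (MulAut G) := (MulAut.conj : G →* MulAut G).range

instance innAut_normal (G : Type*) [Group G] : (innAut G).Normal := by
  constructor
  rintro x ⟨g, rfl⟩ f
  refine ⟨f g, ?_⟩
  ext h
  simp [MulAut.conj_apply, MulAut.mul_apply, mul_assoc]

abbrev Out (G : Type*) [Group G] := MulAut G ⧸ innAut G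

def ResiduallyFinite (G : Type*) [Group G] : Prop :=
  ∀ g : G, g ≠ 1 → ∃ N : Subgroup G, N.Normal ∧ Finite (G ⧸ N) ∧ g ∉ N

noncomputable def expSum (i : Fin 2) : FreeGroup (Fin 2) →* Multiplicative ℤ :=
  FreeGroup.lift (fun j => Multiplicative.ofAdd (if j = i then (1 : ℤ) else 0))

noncomputable def σ (i : Fin 2) (w : FreeGroup (Fin 2)) : ℤ :=
  Multiplicative.toAdd (expSum i w)

def NielsenEquiv {G : Type*} [Group G] {n : ℕ} (Y Z : Fin n → G) : Prop :=
  ∃ φ : FreeGroup (Fin n) ≃* FreeGroup (Fin n),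
    ∀ i, FreeGroup.lift Y (φ (FreeGroup.of i)) = Z i

def SameTSystem {G : Type*} [Group G] {n : ℕ} (Y Z : Fin n → G) : Prop :=
  ∃ ψ : G ≃* G, NielsenEquiv (fun i => ψ (Y i)) Z

/-!
Since there are only finitely many Nielsen classes, the automorphisms of `G` induced by
automorphisms of the free group `F` have finite index in `Out(G)`. Nielsen's theorem, that an
automorphism of `F` acting trivially on `ℤ²` is inner, says that the outer class of an induced
automorphism is determined by a matrix in `GL₂(ℤ)`.

If all relators lie in `F'`, this matrix only depends on the outer automorphism of `G`, so that a
subgroup of finite index in `Out(G)` embeds into the residually finite group `GL₂(ℤ)`. Otherwise,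
as `G` has infinite abelianization, the exponent sums of the consequences of the relators span a
line, which the matrix preserves. In a subgroup of finite index these matrices are unipotent, hence
described by a single integer, and a cyclic subgroup of finite index in `Out(G)` results.

For Nielsen's theorem, view a basis of `F` as a marked theta graph (two vertices joined by three
edges). Unless its loops, up to conjugation, use each letter with a constant sign, it can be folded,
possibly after inverting a basis element, and becomes smaller. Hence every basis is conjugate to one
whose words use each letter with a constant sign. Such a word is as long as the sum of the absolute
values of its exponent sums, so a basis with the exponent sums of the letters is conjugate to the
standard one.
-/

/-! ### Reduced words -/

section Words

open FreeGroup

variable {α : Type*} [DecidableEq α]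

/-- The first letter of the reduced word of `g`, or `none` if `g = 1`. The last letter of `g` is
encoded by `firstLetter g⁻¹`, with the opposite sign. -/
def firstLetter (g : FreeGroup α) : Option (α × Bool) := g.toWord.head?

theorem firstLetter_eq_none {g : FreeGroup α} : firstLetter g = none ↔ g = 1 := by
  simp [firstLetter]

theorem firstLetter_inv (g : FreeGroup α) :
    firstLetter g⁻¹ = g.toWord.getLast?.map fun l => (l.1, !l.2) := by
  simp [firstLetter, toWord_inv, invRev]

theorem mem_toWord_of_firstLetter_eq {g : FreeGroup α} {l : α × Bool}
    (hg : firstLetter g = some l) : l ∈ g.toWord :=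
  List.mem_of_head? hg

theorem sign_eq_of_firstLetter_inv_ne {g h : FreeGroup α} (hgh : firstLetter g⁻¹ ≠ firstLetter h)
    {a b : α × Bool} (ha : a ∈ g.toWord.getLast?) (hb : b ∈ h.toWord.head?) (hab : a.1 = b.1) :
    a.2 = b.2 := by
  rw [firstLetter_inv, firstLetter, Option.mem_def.1 ha, Option.mem_def.1 hb, Option.map_some, hab,
    Ne, Option.some_inj, Prod.ext_iff, not_and] at hgh
  simpa [Bool.not_eq_eq_eq_not] using hgh rfl

theorem list_prod_eq_mk_flatten (L : List (FreeGroup α)) :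
    L.prod = mk (L.map toWord).flatten := by
  induction L with
  | nil => rfl
  | cons g L ih => rw [List.prod_cons, List.map_cons, List.flatten_cons, ← mul_mk, mk_toWord, ih]

theorem norm_list_prod {L : List (FreeGroup α)} (hone : 1 ∉ L)
    (hL : L.IsChain fun g h => firstLetter g⁻¹ ≠ firstLetter h) :
    L.prod.norm = (L.map FreeGroup.norm).sum := by
  have hred : IsReduced (L.map toWord).flatten := by
    refine (List.isChain_flatten (by simpa using hone)).2
      ⟨List.forall_mem_map.2 fun g _ => isReduced_toWord, ?_⟩
    exact (List.isChain_map _).2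
      (hL.imp fun _ _ hgh _ ha _ hb => sign_eq_of_firstLetter_inv_ne hgh ha hb)
  rw [list_prod_eq_mk_flatten, FreeGroup.norm, toWord_mk, hred.reduce_eq, List.length_flatten,
    List.map_map]
  rfl

theorem length_le_norm_list_prod {L : List (FreeGroup α)} (hone : 1 ∉ L)
    (hL : L.IsChain fun g h => firstLetter g⁻¹ ≠ firstLetter h) : L.length ≤ L.prod.norm := by
  have hpos : ∀ n ∈ L.map FreeGroup.norm, 1 ≤ n := by
    rintro _ hn
    obtain ⟨g, hg, rfl⟩ := List.mem_map.1 hn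
    exact Nat.one_le_iff_ne_zero.2 fun h0 => hone (norm_eq_zero.1 h0 ▸ hg)
  simpa [norm_list_prod hone hL] using List.length_le_sum_of_one_le _ hpos

theorem firstLetter_pow_succ (x : FreeGroup α) (n : ℕ) :
    firstLetter (x ^ (n + 1)) = firstLetter x := by
  have h := reduceCyclically.conj_conjugator_reduceCyclically x.toWord
  rw [firstLetter, firstLetter, toWord_pow,
    reduceCyclically.reduce_flatten_replicate_succ isReduced_toWord]
  conv_rhs => rw [← h]
  cases reduceCyclically x.toWord <;> simp [List.replicate_succ, List.head?_append]

theorem toWord_eq_cons {g : FreeGroup α} {l : α × Bool} (hg : firstLetter g = some l) :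
    g.toWord = (mk [l]).toWord ++ ((mk [l])⁻¹ * g).toWord := by
  obtain ⟨L, hL⟩ := List.head?_eq_some_iff.1 hg
  have hred : IsReduced (l :: L) := hL ▸ isReduced_toWord
  have hg' : (mk [l])⁻¹ * g = mk L := by
    rw [inv_mul_eq_iff_eq_mul, mul_mk, ← mk_toWord (x := g), hL, List.singleton_append]
  rw [hg', toWord_mk, toWord_mk, reduce_singleton, hL,
    IsReduced.reduce_eq (L := L) (List.IsChain.tail hred), List.singleton_append]

theorem eq_mul_mul_of_toWord_eq {g u h v : FreeGroup α}
    (hg : g.toWord = u.toWord ++ h.toWord ++ v.toWord) : g = u * h * v := by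
  rw [← mk_toWord (x := g), hg, ← mul_mk, ← mul_mk, mk_toWord, mk_toWord, mk_toWord]

theorem exists_common_letter {x y : FreeGroup α} (hx : x ≠ 1)
    (hxy : firstLetter x = firstLetter y ∨ firstLetter x⁻¹ = firstLetter y⁻¹) :
    ∃ u v x' y' : FreeGroup α, u.norm + v.norm = 1 ∧
      x.toWord = u.toWord ++ x'.toWord ++ v.toWord ∧
      y.toWord = u.toWord ++ y'.toWord ++ v.toWord := by
  have left : ∀ {x y : FreeGroup α}, x ≠ 1 → firstLetter x = firstLetter y →
      ∃ u x' y' : FreeGroup α, u.norm = 1 ∧ x.toWord = u.toWord ++ x'.toWord ∧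
        y.toWord = u.toWord ++ y'.toWord := by
    intro x y hx hxy
    obtain ⟨l, hl⟩ := Option.ne_none_iff_exists'.1 (firstLetter_eq_none.not.2 hx)
    exact ⟨mk [l], _, _, by simp [FreeGroup.norm], toWord_eq_cons hl, toWord_eq_cons (hxy ▸ hl)⟩
  rcases hxy with hxy | hxy
  · obtain ⟨u, x', y', hu, hx', hy'⟩ := left hx hxy
    exact ⟨u, 1, x', y', by simpa using hu, by simpa using hx', by simpa using hy'⟩
  · obtain ⟨u, x', y', hu, hx', hy'⟩ := left (inv_ne_one.2 hx) hxy
    have hinv : ∀ {g h : FreeGroup α}, g⁻¹.toWord = u.toWord ++ h.toWord →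
        g.toWord = h⁻¹.toWord ++ u⁻¹.toWord := by
      intro g h hg
      rw [← inv_inv g, toWord_inv, hg, invRev_append, ← toWord_inv, ← toWord_inv]
    exact ⟨1, u⁻¹, x'⁻¹, y'⁻¹, by simpa using hu, by simpa using hinv hx', by simpa using hinv hy'⟩

end Words

/-! ### Generating families without cancellation -/

section EndLetters

open FreeGroup Monoid

theorem eq_mk_of_of_mem_zpowers {α : Type*} {x : FreeGroup α} {j : α}
    (hj : of j ∈ Subgroup.zpowers x) : ∃ b, x = mk [(j, b)] := by
  classical
  obtain ⟨n, hn⟩ := Subgroup.mem_zpowers_iff.1 hj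
  let f : FreeGroup α →* Multiplicative ℤ := FreeGroup.lift (Pi.mulSingle j (.ofAdd 1))
  have hunit : n * (f x).toAdd = 1 := by simpa [f] using congrArg (fun g => (f g).toAdd) hn
  rcases Int.isUnit_iff.1 (IsUnit.of_mul_eq_one _ hunit) with rfl | rfl
  · exact ⟨true, by simpa [of] using hn⟩
  · exact ⟨false, by rw [← inv_inv x, ← zpow_neg_one x, hn]; rfl⟩

variable {α ι : Type*} [DecidableEq α]

/-- The letters with which a nontrivial power of `g` may begin; an element `h` cancels against none
of these powers, on either side, when `endLetters g` and `endLetters h` are disjoint. -/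
def endLetters (g : FreeGroup α) : Set (Option (α × Bool)) := {firstLetter g, firstLetter g⁻¹}

theorem firstLetter_mem_endLetters_of_mem_zpowers {x y : FreeGroup α}
    (hy : y ∈ Subgroup.zpowers x) (hy1 : y ≠ 1) : firstLetter y ∈ endLetters x := by
  obtain ⟨n, rfl⟩ := Subgroup.mem_zpowers_iff.1 hy
  rcases n with (_ | n) | n
  · simp at hy1
  · exact .inl (by exact_mod_cast firstLetter_pow_succ x n)
  · exact .inr (by rw [zpow_negSucc, ← inv_pow]; exact firstLetter_pow_succ _ n)

theorem exists_word_of_closure_range_eq_top {G : Type*} [Group G] {t : ι → G}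
    (ht : Subgroup.closure (Set.range t) = ⊤) (g : G) :
    ∃ w : CoprodI.Word fun i => Subgroup.zpowers (t i),
      (w.toList.map fun p => (p.2 : G)).prod = g := by
  classical
  have hrange : (CoprodI.lift fun i => (Subgroup.zpowers (t i)).subtype).range = ⊤ := by
    rw [CoprodI.range_eq_iSup]
    simp [Subgroup.zpowers_eq_closure, ← Subgroup.closure_iUnion, ht]
  obtain ⟨c, rfl⟩ := MonoidHom.range_eq_top.1 hrange g
  obtain ⟨w, rfl⟩ := CoprodI.Word.equiv.symm.surjective c
  refine ⟨w, ?_⟩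
  change _ = CoprodI.lift _ w.prod
  simp [CoprodI.Word.prod, map_list_prod, Function.comp_def]

theorem exists_mem_zpowers_of_norm_le_one [Nonempty ι] {t : ι → FreeGroup α}
    (ht : Subgroup.closure (Set.range t) = ⊤)
    (hdisj : Pairwise fun i j => Disjoint (endLetters (t i)) (endLetters (t j)))
    {g : FreeGroup α} (hg : g.norm ≤ 1) : ∃ i, g ∈ Subgroup.zpowers (t i) := by
  obtain ⟨w, rfl⟩ := exists_word_of_closure_range_eq_top ht g
  have hne : ∀ p ∈ w.toList, (p.2 : FreeGroup α) ≠ 1 := fun p hp hp1 =>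
    w.ne_one p hp (Subtype.ext hp1)
  have hone : 1 ∉ w.toList.map fun p => (p.2 : FreeGroup α) := fun h1 =>
    let ⟨p, hp, hp1⟩ := List.mem_map.1 h1
    hne p hp hp1
  have hchain : (w.toList.map fun p => (p.2 : FreeGroup α)).IsChain
      fun x y => firstLetter x⁻¹ ≠ firstLetter y := by
    refine (List.isChain_map _).2 (w.chain_ne.imp_of_mem_imp fun p q hp hq hpq heq => ?_)
    have hp' := firstLetter_mem_endLetters_of_mem_zpowers (inv_mem p.2.2) (inv_ne_one.2 (hne p hp))
    have hq' := firstLetter_mem_endLetters_of_mem_zpowers q.2.2 (hne q hq)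
    exact Set.disjoint_left.1 (hdisj hpq) hp' (heq ▸ hq')
  have hlen := (length_le_norm_list_prod hone hchain).trans hg
  rw [List.length_map] at hlen
  match w.toList, hlen with
  | [], _ => exact ⟨Classical.arbitrary ι, by simp⟩
  | [p], _ => exact ⟨p.1, by simp⟩

end EndLetters

/-! ### Theta graphs -/

section ThetaGenerates

variable {G ι : Type*} [Group G]

/-- The theta graph with two vertices and edges labelled by `t i`, all pointing from the first
vertex to the second one, carries `G`: its loops `t i * (t j)⁻¹` at the first vertex generate
`G`. -/
def ThetaGenerates (t : ι → G) : Prop :=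
  Subgroup.closure (Set.range fun p : ι × ι => t p.1 * (t p.2)⁻¹) = ⊤

theorem ThetaGenerates.shift {t : ι → G} (ht : ThetaGenerates t) (g h : G) :
    ThetaGenerates fun i => g * t i * h := by
  have := congrArg (Subgroup.map (MulAut.conj g).toMonoidHom) ht
  rw [MonoidHom.map_closure, Subgroup.map_top_of_surjective _ (MulAut.conj g).surjective,
    ← Set.range_comp] at this
  rw [ThetaGenerates, ← this]
  congr 2
  ext p
  simp [mul_assoc]

theorem ThetaGenerates.comp {κ : Type*} {t : ι → G} (ht : ThetaGenerates t) (e : κ ≃ ι) :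
    ThetaGenerates (t ∘ e) := by
  rw [ThetaGenerates, ← ht, ← (e.prodCongr e).surjective.range_comp]
  rfl

theorem thetaGenerates_iff_closure_range_mul_inv {t : ι → G} (k : ι) :
    ThetaGenerates t ↔ Subgroup.closure (Set.range fun i => t i * (t k)⁻¹) = ⊤ := by
  rw [ThetaGenerates]
  refine Eq.congr_left (le_antisymm ?_ (Subgroup.closure_mono ?_))
  · rw [Subgroup.closure_le]
    rintro _ ⟨⟨i, j⟩, rfl⟩
    have hmem : ∀ i, t i * (t k)⁻¹ ∈ Subgroup.closure (Set.range fun i => t i * (t k)⁻¹) :=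
      fun i => Subgroup.subset_closure ⟨i, rfl⟩
    simpa using mul_mem (hmem i) (inv_mem (hmem j))
  · rintro _ ⟨i, rfl⟩
    exact ⟨(i, k), rfl⟩

theorem thetaGenerates_pair {x y : G} :
    ThetaGenerates ![x, y, 1] ↔ Subgroup.closure {x, y} = ⊤ := by
  have hrange : (Set.range fun i => ![x, y, 1] i * (![x, y, 1] 2)⁻¹) = insert 1 {x, y} := by
    ext g
    simp [eq_comm, or_comm]
  rw [thetaGenerates_iff_closure_range_mul_inv 2, hrange, Subgroup.closure_insert_one]

theorem ThetaGenerates.injective (hG : ¬IsCyclic G) {t : Fin 3 → G} (ht : ThetaGenerates t) :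
    Function.Injective t := by
  intro i j hij
  by_contra hne
  obtain ⟨k, hk⟩ : ∃ k, ∀ l, l = k ∨ l = i ∨ l = j := by
    clear hij
    decide +revert
  have hle : Set.range (fun l => t l * (t i)⁻¹) ⊆ Subgroup.zpowers (t k * (t i)⁻¹) := by
    rintro _ ⟨l, rfl⟩
    rcases hk l with rfl | rfl | rfl
    · exact Subgroup.mem_zpowers _
    · simp
    · simp [← hij]
  refine hG ⟨t k * (t i)⁻¹, fun g => ?_⟩
  exact (Subgroup.closure_le _).2 hle
    ((thetaGenerates_iff_closure_range_mul_inv i).1 ht ▸ Subgroup.mem_top g)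

theorem closure_pair_inv_right {x y : G} (h : Subgroup.closure {x, y} = ⊤) :
    Subgroup.closure {x, y⁻¹} = ⊤ := by
  rw [← top_le_iff, ← h, Subgroup.closure_le]
  rintro _ (rfl | rfl)
  · exact Subgroup.subset_closure (by simp)
  · exact inv_mem_iff.1 (Subgroup.subset_closure (by simp))

theorem closure_pair_conj {x y : G} (h : Subgroup.closure {x, y} = ⊤) (g : G) :
    Subgroup.closure {g * x * g⁻¹, g * y * g⁻¹} = ⊤ := by
  have := congrArg (Subgroup.map (MulAut.conj g).toMonoidHom) h
  rw [MonoidHom.map_closure, Subgroup.map_top_of_surjective _ (MulAut.conj g).surjective] at this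
  simpa [Set.image_pair] using this

end ThetaGenerates

section Alternating

open FreeGroup

variable {α ι : Type*}

/-- The signs of the letters of a word alternate, starting with `b` and ending with `false`. Paths
in a theta graph that end at its first vertex are spelled by such words. -/
def AlternatesFrom : Bool → List (ι × Bool) → Prop
  | b, [] => b = true
  | b, l :: L => l.2 = b ∧ AlternatesFrom (!b) L

theorem AlternatesFrom.mk_mul [DecidableEq ι] {b : Bool} {w : FreeGroup ι}
    (hw : AlternatesFrom (!b) w.toWord) (i : ι) : AlternatesFrom b (mk [(i, b)] * w).toWord := by
  rw [← mk_toWord (x := w), mul_mk, List.singleton_append, toWord_mk, reduce.cons, reduce_toWord]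
  match w.toWord, hw with
  | [], hw => simpa [AlternatesFrom] using hw
  | l :: L, ⟨hl, hL⟩ =>
    dsimp only
    split
    · simpa using hL
    · exact ⟨rfl, hl, hL⟩

theorem AlternatesFrom.isChain {b : Bool} {L : List (ι × Bool)} (hL : AlternatesFrom b L)
    (hred : IsReduced L) : L.IsChain fun l m => l.1 ≠ m.1 ∧ m.2 = !l.2 := by
  induction L generalizing b with
  | nil => exact .nil
  | cons l L ih =>
    obtain ⟨rfl, hL⟩ := hL
    obtain ⟨hl, hred⟩ := List.isChain_cons.1 hred
    refine List.isChain_cons.2 ⟨fun m hm => ?_, ih hL hred⟩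
    obtain ⟨M, rfl⟩ := List.head?_eq_some_iff.1 hm
    exact ⟨fun hlm => by simpa [hL.1] using hl m hm hlm, hL.1⟩

theorem AlternatesFrom.length_ne_one {L : List (ι × Bool)} (hL : AlternatesFrom true L) :
    L.length ≠ 1 := by
  match L, hL with
  | [], _ => simp
  | [_], ⟨_, h⟩ => exact absurd h Bool.false_ne_true
  | _ :: _ :: _, _ => simp

theorem ThetaGenerates.exists_alternatesFrom [DecidableEq ι] {G : Type*} [Group G] {t : ι → G}
    (ht : ThetaGenerates t) (g : G) :
    ∃ w, AlternatesFrom true (toWord w) ∧ FreeGroup.lift t w = g := by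
  have hg : g ∈ Subgroup.closure (Set.range fun p : ι × ι => t p.1 * (t p.2)⁻¹) :=
    ht ▸ Subgroup.mem_top g
  have hstep : ∀ (i j : ι) (h : G), (∃ w, AlternatesFrom true (toWord w) ∧ FreeGroup.lift t w = h) →
      ∃ w, AlternatesFrom true (toWord w) ∧ FreeGroup.lift t w = t i * (t j)⁻¹ * h := by
    rintro i j _ ⟨w, hw, rfl⟩
    exact ⟨_, .mk_mul (b := true) (.mk_mul (b := false) hw j) i, by simp [mul_assoc]⟩
  induction hg using Subgroup.closure_induction_left with
  | one => exact ⟨1, by simp [AlternatesFrom], map_one _⟩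
  | mul_left _ hx h _ ih =>
    obtain ⟨⟨i, j⟩, rfl⟩ := hx
    exact hstep i j h ih
  | inv_mul_cancel _ hx h _ ih =>
    obtain ⟨⟨i, j⟩, rfl⟩ := hx
    simpa using hstep j i h ih

variable [DecidableEq α]

/-- The theta graph with edges labelled by `t` is folded: no two edges leave the first vertex, or
arrive at the second one, through the same letter. -/
def IsFolded (t : ι → FreeGroup α) : Prop :=
  (Function.Injective fun i => firstLetter (t i)) ∧ Function.Injective fun i => firstLetter (t i)⁻¹

theorem AlternatesFrom.norm_le_norm_lift [DecidableEq ι] {t : ι → FreeGroup α}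
    (hone : ∀ i, t i ≠ 1) (ht : IsFolded t) {b : Bool} {w : FreeGroup ι}
    (hw : AlternatesFrom b w.toWord) : w.norm ≤ (FreeGroup.lift t w).norm := by
  have hlift : FreeGroup.lift t w = (w.toWord.map fun l => cond l.2 (t l.1) (t l.1)⁻¹).prod := by
    rw [← lift_mk, mk_toWord]
  have hone' : 1 ∉ w.toWord.map fun l => cond l.2 (t l.1) (t l.1)⁻¹ := by
    simp only [List.mem_map, not_exists, not_and]
    rintro ⟨i, _ | _⟩ - <;> simp [hone i]
  rw [hlift]
  refine (List.length_map _).symm.trans_le (length_le_norm_list_prod hone' ?_)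
  refine (List.isChain_map _).2 ((hw.isChain isReduced_toWord).imp ?_)
  rintro ⟨i, _ | _⟩ ⟨j, c⟩ ⟨hij, rfl⟩
  · simpa using ht.1.ne hij
  · simpa using ht.2.ne hij

theorem ThetaGenerates.exists_eq_one [Nonempty α] {t : ι → FreeGroup α} (ht : ThetaGenerates t)
    (hfold : IsFolded t) : ∃ i, t i = 1 := by
  classical
  by_contra! hone
  obtain ⟨w, hw, hwa⟩ := ht.exists_alternatesFrom (of (Classical.arbitrary α))
  have hle := hw.norm_le_norm_lift hone hfold
  rw [hwa, norm_of] at hle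
  have hw1 : w.norm ≠ 0 := by
    rintro h0
    rw [norm_eq_zero.1 h0, _root_.map_one] at hwa
    exact of_ne_one _ hwa.symm
  exact hw.length_ne_one (le_antisymm hle (Nat.one_le_iff_ne_zero.2 hw1))

end Alternating

/-! ### Sign-coherent theta graphs -/

section Sign

open FreeGroup

variable {α : Type*} [DecidableEq α] {s : α → Bool} {g h : FreeGroup α}

/-- `g` is a positive word in the letters `(i, s i)`. -/
def IsPos (s : α → Bool) (g : FreeGroup α) : Prop := ∀ l ∈ g.toWord, l.2 = s l.1

theorem isPos_one : IsPos s 1 := by simp [IsPos]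

theorem isPos_mk_singleton {l : α × Bool} : IsPos s (mk [l]) ↔ l.2 = s l.1 := by
  simp [IsPos]

theorem isPos_not_inv_iff : IsPos (fun i => !s i) g⁻¹ ↔ IsPos s g := by
  simp only [IsPos, toWord_inv, invRev, List.mem_reverse, List.forall_mem_map, Bool.not_inj_iff]

theorem isPos_not_iff : IsPos (fun i => !s i) g ↔ IsPos s g⁻¹ := by
  rw [← isPos_not_inv_iff (s := s), inv_inv]

theorem IsPos.mul (hg : IsPos s g) (hh : IsPos s h) : IsPos s (g * h) := fun l hl =>
  (List.mem_append.1 ((toWord_mul_sublist g h).subset hl)).elim (hg l) (hh l)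

theorem IsPos.firstLetter_inv_ne (hg : IsPos s g) (hh : IsPos s h) (hh1 : h ≠ 1) :
    firstLetter g⁻¹ ≠ firstLetter h := by
  intro heq
  obtain ⟨l, hl⟩ := Option.ne_none_iff_exists'.1 (firstLetter_eq_none.not.2 hh1)
  have hpos : l.2 = s l.1 := hh l (mem_toWord_of_firstLetter_eq hl)
  have hneg : l.2 = !s l.1 :=
    isPos_not_inv_iff.2 hg l (mem_toWord_of_firstLetter_eq (heq.trans hl))
  exact Bool.eq_not_self _ |>.1 (hpos.symm.trans hneg)

/-- `g` or `g⁻¹` is a positive word in the letters `(i, s i)`. -/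
def IsCoherent (s : α → Bool) (g : FreeGroup α) : Prop := IsPos s g ∨ IsPos s g⁻¹

theorem isCoherent_inv_iff : IsCoherent s g⁻¹ ↔ IsCoherent s g := by
  rw [IsCoherent, IsCoherent, inv_inv, or_comm]

/-- Up to a common conjugation, all loops of the theta graph with edges labelled by `t` are coherent
with respect to one choice of signs. -/
def ThetaCoherent {ι : Type*} (t : ι → FreeGroup α) : Prop :=
  ∃ (g : FreeGroup α) (s : α → Bool), ∀ i j, IsCoherent s (g * (t i * (t j)⁻¹) * g⁻¹)

theorem ThetaCoherent.of_shift {ι : Type*} {t : ι → FreeGroup α} (g h : FreeGroup α)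
    (ht : ThetaCoherent fun i => g * t i * h) : ThetaCoherent t := by
  obtain ⟨k, s, hk⟩ := ht
  refine ⟨k * g, s, fun i j => ?_⟩
  convert hk i j using 1
  group

theorem ThetaCoherent.of_comp {ι κ : Type*} {t : ι → FreeGroup α} (e : κ ≃ ι)
    (ht : ThetaCoherent (t ∘ e)) : ThetaCoherent t := by
  obtain ⟨g, s, h⟩ := ht
  exact ⟨g, s, fun i j => by simpa using h (e.symm i) (e.symm j)⟩

theorem thetaCoherent_of_isCoherent {x y z : FreeGroup α} (hxy : IsCoherent s (x * y⁻¹))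
    (hxz : IsCoherent s (x * z⁻¹)) (hyz : IsCoherent s (y * z⁻¹)) : ThetaCoherent ![x, y, z] := by
  have hyx : IsCoherent s (y * x⁻¹) := by simpa using isCoherent_inv_iff.2 hxy
  have hzx : IsCoherent s (z * x⁻¹) := by simpa using isCoherent_inv_iff.2 hxz
  have hzy : IsCoherent s (z * y⁻¹) := by simpa using isCoherent_inv_iff.2 hyz
  have hone : IsCoherent s 1 := .inl isPos_one
  refine ⟨1, s, fun i j => ?_⟩
  rw [one_mul, inv_one, mul_one]
  fin_cases i <;> fin_cases j <;> simpa

end Sign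

section Folding

open FreeGroup

theorem injective_fin_three_iff {β : Type*} {f : Fin 3 → β} :
    Function.Injective f ↔ f 0 ≠ f 1 ∧ f 0 ≠ f 2 ∧ f 1 ≠ f 2 := by
  refine ⟨fun h => ⟨h.ne (by decide), h.ne (by decide), h.ne (by decide)⟩, ?_⟩
  rintro ⟨h01, h02, h12⟩ i j hij
  fin_cases i <;> fin_cases j <;> first | rfl | exact absurd hij ‹_› | exact absurd hij.symm ‹_›

variable {α : Type*} [DecidableEq α]

theorem exists_sum_norm_shift_lt {t : Fin 3 → FreeGroup α} (ht : Function.Injective t)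
    (hfold : ¬IsFolded t) :
    ∃ g h, ∑ k, (g * t k * h).norm < ∑ k, (t k).norm := by
  obtain ⟨i, j, hij, hletter⟩ : ∃ i j, i ≠ j ∧
      (firstLetter (t i) = firstLetter (t j) ∨ firstLetter (t i)⁻¹ = firstLetter (t j)⁻¹) := by
    rw [IsFolded, Classical.not_and_iff_not_or_not, Function.not_injective_iff,
      Function.not_injective_iff] at hfold
    grind
  have hone : t i ≠ 1 := by
    rintro h1
    refine ht.ne hij (h1.trans (Eq.symm ?_))
    simpa [h1, firstLetter_eq_none.2 rfl, eq_comm (a := none), firstLetter_eq_none] using hletter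
  obtain ⟨u, v, x, y, huv, hx, hy⟩ := exists_common_letter hone hletter
  have hle : ∀ k, (u⁻¹ * t k * v⁻¹).norm ≤ (t k).norm + 1 := fun k => by
    have h1 := norm_mul_le (u⁻¹ * t k) v⁻¹
    have h2 := norm_mul_le u⁻¹ (t k)
    rw [norm_inv_eq] at h1 h2
    omega
  have hlt : ∀ {g k : FreeGroup α}, g.toWord = u.toWord ++ k.toWord ++ v.toWord →
      (u⁻¹ * g * v⁻¹).norm + 1 = g.norm := fun {g k} hg => by
    have hk : u⁻¹ * g * v⁻¹ = k := by rw [eq_mul_mul_of_toWord_eq hg]; group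
    have hlen := congrArg List.length hg
    rw [List.length_append, List.length_append] at hlen
    rw [hk, FreeGroup.norm, FreeGroup.norm, hlen, ← huv, FreeGroup.norm, FreeGroup.norm]
    omega
  have hi := hlt hx
  have hj := hlt hy
  refine ⟨u⁻¹, v⁻¹, ?_⟩
  have h0 := hle 0
  have h1 := hle 1
  have h2 := hle 2
  rw [Fin.sum_univ_three, Fin.sum_univ_three]
  fin_cases i <;> fin_cases j <;>
    dsimp only [Fin.reduceFinMk, Fin.mk_one, Fin.zero_eta] at hij hi hj <;> omega

end Folding

section RankTwo

open FreeGroup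

theorem not_isCyclic_freeGroup {α : Type*} [Nontrivial α] : ¬IsCyclic (FreeGroup α) := by
  classical
  intro h
  obtain ⟨a, b, hab⟩ := exists_pair_ne α
  have hcomm : (of a * of b).toWord = (of b * of a).toWord :=
    congrArg toWord (IsCyclic.commGroup.mul_comm (of a) (of b))
  simp [toWord_mul, reduce.cons, hab] at hcomm

variable {α : Type*} [DecidableEq α]

theorem disjoint_endLetters_iff {x y : FreeGroup α} :
    Disjoint (endLetters x) (endLetters y) ↔
      (firstLetter x ≠ firstLetter y ∧ firstLetter x⁻¹ ≠ firstLetter y⁻¹) ∧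
        firstLetter x ≠ firstLetter y⁻¹ ∧ firstLetter x⁻¹ ≠ firstLetter y := by
  simp only [endLetters, Set.disjoint_insert_left, Set.disjoint_singleton_left,
    Set.mem_insert_iff, Set.mem_singleton_iff]
  tauto

theorem thetaCoherent_mk_singleton {k l : α} (hkl : k ≠ l) (b c : Bool) :
    ThetaCoherent ![mk [(k, b)], mk [(l, c)], 1] := by
  have hx : IsPos (fun i => if i = k then b else !c) (mk [(k, b)]) := by simp [isPos_mk_singleton]
  have hy : IsPos (fun i => if i = k then b else !c) (mk [(l, c)])⁻¹ := by
    rw [← isPos_not_iff, isPos_mk_singleton]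
    simp [hkl.symm]
  exact thetaCoherent_of_isCoherent (.inl (hx.mul hy)) (.inl (by simpa using hx))
    (.inr (by simpa using hy))

theorem thetaCoherent_of_disjoint_endLetters {x y : FreeGroup (Fin 2)}
    (hgen : Subgroup.closure {x, y} = ⊤) (hxy : Disjoint (endLetters x) (endLetters y)) :
    ThetaCoherent ![x, y, 1] := by
  have hgen' : Subgroup.closure (Set.range ![x, y]) = ⊤ := by simpa [Set.pair_comm] using hgen
  have hdisj : Pairwise fun i j => Disjoint (endLetters (![x, y] i)) (endLetters (![x, y] j)) := by
    intro i j hij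
    fin_cases i <;> fin_cases j <;> first | exact absurd rfl hij | exact hxy | exact hxy.symm
  have hletter : ∀ j, ∃ i b, ![x, y] i = mk [(j, b)] := fun j =>
    (exists_mem_zpowers_of_norm_le_one hgen' hdisj (norm_of j).le).imp fun _ =>
      eq_mk_of_of_mem_zpowers
  choose e b he using hletter
  have hinj : Function.Injective e := fun j k hjk => by
    have hmk : mk [(j, b j)] = mk [(k, b k)] :=
      (he j).symm.trans ((congrArg ![x, y] hjk).trans (he k))
    have hjkb : j = k ∧ b j = b k := by simpa using congrArg toWord hmk
    exact hjkb.1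
  obtain ⟨k, hk⟩ := Finite.injective_iff_surjective.1 hinj 0
  obtain ⟨l, hl⟩ := Finite.injective_iff_surjective.1 hinj 1
  have hkl : k ≠ l := by
    rintro rfl
    exact absurd (hk.symm.trans hl) (by decide)
  have hx : x = mk [(k, b k)] := by simpa [hk] using he k
  have hy : y = mk [(l, b l)] := by simpa [hl] using he l
  rw [hx, hy]
  exact thetaCoherent_mk_singleton hkl _ _

theorem shift_vecCons {G : Type*} [Group G] (g h x y z : G) :
    (fun i => g * ![x, y, z] i * h) = ![g * x * h, g * y * h, g * z * h] := by
  ext i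
  fin_cases i <;> rfl

theorem IsPos.exists_fold {s : α → Bool} {x y z : FreeGroup α} (hx : IsPos s x) (hy : IsPos s y)
    (hz : IsPos s z⁻¹) (hx1 : x ≠ 1)
    (hxy : firstLetter x = firstLetter y ∨ firstLetter x⁻¹ = firstLetter y⁻¹) :
    ∃ g h x' y' z', (fun i => g * ![x, y, z] i * h) = ![x', y', z'] ∧ IsPos s x' ∧ IsPos s y' ∧
      IsPos s z'⁻¹ ∧ x'.norm + y'.norm < x.norm + y.norm := by
  obtain ⟨u, v, x', y', huv, hx', hy'⟩ := exists_common_letter hx1 hxy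
  have hu : IsPos s u := fun l hl => hx l (by simp [hx', hl])
  have hv : IsPos s v := fun l hl => hx l (by simp [hx', hl])
  have hlt : x'.norm + y'.norm < x.norm + y.norm := by
    simp only [FreeGroup.norm, hx', hy', List.length_append] at huv ⊢
    omega
  refine ⟨u⁻¹, v⁻¹, x', y', u⁻¹ * z * v⁻¹, ?_, fun l hl => hx l (by simp [hx', hl]),
    fun l hl => hy l (by simp [hy', hl]), ?_, hlt⟩
  · rw [shift_vecCons, eq_mul_mul_of_toWord_eq hx', eq_mul_mul_of_toWord_eq hy']
    congr <;> group
  · simpa [mul_assoc] using hv.mul (hz.mul hu)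

theorem thetaCoherent_of_isPos {s : Fin 2 → Bool} {x y z : FreeGroup (Fin 2)}
    (hx : IsPos s x) (hy : IsPos s y) (hz : IsPos s z⁻¹) (ht : ThetaGenerates ![x, y, z]) :
    ThetaCoherent ![x, y, z] := by
  induction hN : x.norm + y.norm using Nat.strong_induction_on generalizing x y z with
  | _ N ih =>
  by_cases hx1 : x = 1
  · subst hx1
    exact thetaCoherent_of_isCoherent (s := s) (.inr (by simpa using hy))
      (.inl (by simpa using hz)) (.inl (hy.mul hz))
  by_cases hy1 : y = 1
  · subst hy1
    exact thetaCoherent_of_isCoherent (s := s) (.inl (by simpa using hx))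
      (.inl (hx.mul hz)) (.inl (by simpa using hz))
  by_cases hxy : firstLetter x = firstLetter y ∨ firstLetter x⁻¹ = firstLetter y⁻¹
  · obtain ⟨g, h, x', y', z', hshift, hx', hy', hz', hlt⟩ := hx.exists_fold hy hz hx1 hxy
    refine ThetaCoherent.of_shift g h ?_
    rw [hshift]
    exact ih _ (hN ▸ hlt) hx' hy' hz' (hshift ▸ ht.shift g h) rfl
  rw [not_or] at hxy
  have hfold : IsFolded ![x, y, z] := by
    have hz' := isPos_not_iff.2 hz
    refine ⟨injective_fin_three_iff.2 ⟨hxy.1, ?_, ?_⟩, injective_fin_three_iff.2 ⟨hxy.2, ?_, ?_⟩⟩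
    · simpa using (hz.firstLetter_inv_ne hx hx1).symm
    · simpa using (hz.firstLetter_inv_ne hy hy1).symm
    · simpa using (hz'.firstLetter_inv_ne (isPos_not_inv_iff.2 hx) (inv_ne_one.2 hx1)).symm
    · simpa using (hz'.firstLetter_inv_ne (isPos_not_inv_iff.2 hy) (inv_ne_one.2 hy1)).symm
  obtain rfl : z = 1 := by
    obtain ⟨i, hi⟩ := ht.exists_eq_one hfold
    fin_cases i
    exacts [absurd hi hx1, absurd hi hy1, hi]
  exact thetaCoherent_of_disjoint_endLetters (thetaGenerates_pair.1 ht) (disjoint_endLetters_iff.2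
    ⟨hxy, (hy.firstLetter_inv_ne hx hx1).symm, hx.firstLetter_inv_ne hy hy1⟩)

theorem thetaCoherent_of_inv_right {x y : FreeGroup (Fin 2)} (hgen : Subgroup.closure {x, y} = ⊤)
    (h : ThetaCoherent ![x, y⁻¹, 1]) : ThetaCoherent ![x, y, 1] := by
  obtain ⟨g, s, h⟩ := h
  have hgen' := thetaGenerates_pair.2 (closure_pair_conj hgen g)
  have hu : IsCoherent s (g * x * g⁻¹) := by simpa using h 0 2
  have hv : IsCoherent s (g * y * g⁻¹) := by simpa using h 2 1
  refine ThetaCoherent.of_shift g g⁻¹ ?_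
  rw [shift_vecCons, mul_one, mul_inv_cancel]
  generalize g * x * g⁻¹ = u at *
  generalize g * y * g⁻¹ = v at *
  rcases hu with hu | hu <;> rcases hv with hv | hv
  · exact thetaCoherent_of_isPos hu hv (by simpa using isPos_one) hgen'
  · exact thetaCoherent_of_isCoherent (.inl (hu.mul hv)) (.inl (by simpa using hu))
      (.inr (by simpa using hv))
  · exact thetaCoherent_of_isCoherent (.inr (by simpa using hv.mul hu)) (.inr (by simpa using hu))
      (.inl (by simpa using hv))
  · exact thetaCoherent_of_isPos (isPos_not_iff.2 hu) (isPos_not_iff.2 hv)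
      (by simpa using isPos_one) hgen'

theorem thetaCoherent_of_not_isFolded {t : Fin 3 → FreeGroup (Fin 2)} (ht : ThetaGenerates t)
    (hfold : ¬IsFolded t)
    (ih : ∀ t' : Fin 3 → FreeGroup (Fin 2), ThetaGenerates t' →
      ∑ k, (t' k).norm < ∑ k, (t k).norm → ThetaCoherent t') :
    ThetaCoherent t := by
  obtain ⟨g, h, hlt⟩ := exists_sum_norm_shift_lt (ht.injective not_isCyclic_freeGroup) hfold
  exact .of_shift g h (ih _ (ht.shift g h) hlt)

theorem thetaCoherent_of_isFolded {t : Fin 3 → FreeGroup (Fin 2)} (ht : ThetaGenerates t)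
    (hfold : IsFolded t)
    (ih : ∀ t' : Fin 3 → FreeGroup (Fin 2), ThetaGenerates t' →
      ∑ k, (t' k).norm < ∑ k, (t k).norm → ThetaCoherent t') :
    ThetaCoherent t := by
  obtain ⟨k, hk⟩ := ht.exists_eq_one hfold
  let e := Equiv.swap k 2
  obtain ⟨x, y, hxy⟩ : ∃ x y, t ∘ e = ![x, y, 1] := by
    refine ⟨(t ∘ e) 0, (t ∘ e) 1, ?_⟩
    ext i
    fin_cases i <;> simp [e, hk]
  have hgen : Subgroup.closure {x, y} = ⊤ := thetaGenerates_pair.1 (hxy ▸ ht.comp e)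
  have hsum : ∑ i, (![x, y, 1] i).norm = ∑ i, (t i).norm :=
    hxy ▸ Equiv.sum_comp e fun i => (t i).norm
  have hne : firstLetter x ≠ firstLetter y ∧ firstLetter x⁻¹ ≠ firstLetter y⁻¹ := by
    have hfold' : IsFolded (t ∘ e) := ⟨hfold.1.comp e.injective, hfold.2.comp e.injective⟩
    rw [hxy] at hfold'
    exact ⟨(injective_fin_three_iff.1 hfold'.1).1, (injective_fin_three_iff.1 hfold'.2).1⟩
  refine ThetaCoherent.of_comp e (hxy ▸ ?_)
  by_cases hdisj : Disjoint (endLetters x) (endLetters y)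
  · exact thetaCoherent_of_disjoint_endLetters hgen hdisj
  refine thetaCoherent_of_inv_right hgen (thetaCoherent_of_not_isFolded
    (thetaGenerates_pair.2 (closure_pair_inv_right hgen)) (fun hfold' => hdisj ?_)
    fun t' ht' hlt => ?_)
  · have hfirst := (injective_fin_three_iff.1 hfold'.1).1
    have hlast := (injective_fin_three_iff.1 hfold'.2).1
    exact disjoint_endLetters_iff.2 ⟨hne, by simpa using hfirst, by simpa using hlast⟩
  · exact ih t' ht' (hsum ▸ by simpa [Fin.sum_univ_three] using hlt)

theorem ThetaGenerates.thetaCoherent {t : Fin 3 → FreeGroup (Fin 2)} (ht : ThetaGenerates t) :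
    ThetaCoherent t := by
  induction hN : ∑ i, (t i).norm using Nat.strong_induction_on generalizing t with
  | _ N ih =>
  have ih' : ∀ t' : Fin 3 → FreeGroup (Fin 2), ThetaGenerates t' →
      ∑ i, (t' i).norm < ∑ i, (t i).norm → ThetaCoherent t' :=
    fun t' ht' hlt => ih _ (hN ▸ hlt) ht' rfl
  by_cases hfold : IsFolded t
  · exact thetaCoherent_of_isFolded ht hfold ih'
  · exact thetaCoherent_of_not_isFolded ht hfold ih'

end RankTwo

/-! ### Automorphisms acting trivially on exponent sums -/

section ExponentSums

open FreeGroup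

theorem σ_mk_cons (i : Fin 2) (l : Fin 2 × Bool) (L : List (Fin 2 × Bool)) :
    σ i (mk (l :: L)) = (if l.1 = i then if l.2 then 1 else -1 else 0) + σ i (mk L) := by
  obtain ⟨j, b⟩ := l
  cases b <;> by_cases hj : j = i <;> simp [σ, expSum, hj]

theorem IsPos.norm_eq {s : Fin 2 → Bool} {g : FreeGroup (Fin 2)} (hg : IsPos s g) :
    (g.norm : ℤ) = ∑ i, (if s i then 1 else -1) * σ i g := by
  suffices key : ∀ L : List (Fin 2 × Bool), (∀ l ∈ L, l.2 = s l.1) →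
      (L.length : ℤ) = ∑ i, (if s i then 1 else -1) * σ i (mk L) by
    simpa only [FreeGroup.norm, mk_toWord] using key g.toWord hg
  intro L hL
  induction L with
  | nil => simp [σ, ← one_eq_mk]
  | cons l L ih =>
    have hl : l.2 = s l.1 := hL l List.mem_cons_self
    have hletter : ∑ i, (if s i then 1 else -1) *
        (if l.1 = i then if l.2 then 1 else -1 else 0) = (1 : ℤ) := by
      rw [Finset.sum_eq_single_of_mem l.1 (Finset.mem_univ _) fun i _ hi => by simp [hi.symm], hl]
      cases s l.1 <;> simp
    simp only [σ_mk_cons, mul_add, Finset.sum_add_distrib, hletter,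
      ← ih fun l hl => hL l (List.mem_cons_of_mem _ hl), List.length_cons, Nat.cast_add,
      Nat.cast_one, add_comm]

theorem IsCoherent.norm_le {s : Fin 2 → Bool} {g : FreeGroup (Fin 2)} (hg : IsCoherent s g) :
    (g.norm : ℤ) ≤ ∑ i, |σ i g| := by
  have hpos : ∀ g, IsPos s g → (g.norm : ℤ) ≤ ∑ i, |σ i g| := fun g hg => by
    rw [hg.norm_eq]
    refine Finset.sum_le_sum fun i _ => ?_
    split
    · simpa only [one_mul] using le_abs_self _
    · simpa only [neg_one_mul] using neg_le_abs _
  rcases hg with hg | hg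
  · exact hpos g hg
  · simpa [σ] using hpos g⁻¹ hg

theorem IsCoherent.eq_of {s : Fin 2 → Bool} {g : FreeGroup (Fin 2)} {j : Fin 2}
    (hg : IsCoherent s g) (hσ : ∀ i, σ i g = if i = j then 1 else 0) : g = of j := by
  have hnorm : g.norm ≤ 1 := by
    have hsum : ∑ i, |σ i g| = 1 := by simp [hσ, apply_ite]
    exact_mod_cast hsum ▸ hg.norm_le
  have hne : g.toWord ≠ [] := fun h => by
    have hj := hσ j
    rw [toWord_eq_nil_iff.1 h] at hj
    simp [σ] at hj
  obtain ⟨⟨k, b⟩, hl⟩ : ∃ l, g.toWord = [l] :=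
    List.length_eq_one_iff.1 (le_antisymm hnorm (List.length_pos_iff.2 hne))
  have hmk : g = mk [(k, b)] := by rw [← hl, mk_toWord]
  have hj := hσ j
  rw [hmk, σ_mk_cons, if_pos rfl] at hj
  rw [hmk]
  by_cases hkj : k = j <;> cases b <;> simp [hkj, σ, ← one_eq_mk] at hj
  rw [hkj]
  rfl

end ExponentSums

/-- Homomorphisms `τ` to `ℤ` dual to a generating family `x`: the coordinates given by `x` when the
abelianization is free abelian on `x`. -/
structure IsDualGenerators {ι Γ : Type*} [DecidableEq ι] [Group Γ] (x : ι → Γ)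
    (τ : ι → Γ →* Multiplicative ℤ) : Prop where
  closure_range_eq_top : Subgroup.closure (Set.range x) = ⊤
  toAdd_apply_generator : ∀ i j, (τ i (x j)).toAdd = if i = j then 1 else 0

namespace IsDualGenerators

variable {ι Γ : Type*} [DecidableEq ι] [Group Γ] {x : ι → Γ}
  {τ : ι → Γ →* Multiplicative ℤ}

theorem map_eq_prod_zpow [Fintype ι] (h : IsDualGenerators x τ) {A : Type*} [CommGroup A]
    (f : Γ →* A) (g : Γ) : f g = ∏ k, f (x k) ^ (τ k g).toAdd := by
  have hg : g ∈ Subgroup.closure (Set.range x) := h.closure_range_eq_top ▸ Subgroup.mem_top g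
  induction hg using Subgroup.closure_induction with
  | mem g hg =>
    obtain ⟨j, rfl⟩ := hg
    simp [h.toAdd_apply_generator]
  | one => simp
  | mul g g' _ _ hg hg' =>
    simp only [map_mul, toAdd_mul, hg, hg', zpow_add, Finset.prod_mul_distrib]
  | inv g _ hg => simp only [map_inv, toAdd_inv, hg, zpow_neg, Finset.prod_inv_distrib]

theorem mem_commutator_iff [Finite ι] (h : IsDualGenerators x τ) {g : Γ} :
    g ∈ commutator Γ ↔ ∀ k, τ k g = 1 := by
  refine ⟨fun hg k => Abelianization.commutator_subset_ker (τ k) hg, fun hg => ?_⟩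
  have := Fintype.ofFinite ι
  rw [← Abelianization.ker_of, MonoidHom.mem_ker, h.map_eq_prod_zpow]
  simp [hg]

variable [Fintype ι]

/-- The matrix by which an automorphism acts on the coordinates `τ`. -/
def autMatrix (h : IsDualGenerators x τ) : MulAut Γ →* GL ι ℤ :=
  MonoidHom.toHomUnits
    { toFun α := .of fun i j => (τ i (α (x j))).toAdd
      map_one' := by
        ext i j
        simp [h.toAdd_apply_generator, Matrix.one_apply]
      map_mul' α β := by
        ext i j
        rw [Matrix.mul_apply]
        simpa [mul_comm] using congrArg Multiplicative.toAdd
          (h.map_eq_prod_zpow ((τ i).comp α.toMonoidHom) (β (x j))) }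

theorem autMatrix_apply (h : IsDualGenerators x τ) (α : MulAut Γ) (i j : ι) :
    h.autMatrix α i j = (τ i (α (x j))).toAdd := rfl

theorem mem_ker_autMatrix (h : IsDualGenerators x τ) {α : MulAut Γ} :
    α ∈ h.autMatrix.ker ↔ ∀ i j, (τ i (α (x j))).toAdd = if i = j then 1 else 0 := by
  simp only [MonoidHom.mem_ker, Matrix.GeneralLinearGroup.ext_iff, autMatrix_apply, Units.val_one,
    Matrix.one_apply]

open Matrix in
theorem autMatrix_mulVec (h : IsDualGenerators x τ) (α : MulAut Γ) (g : Γ) :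
    (h.autMatrix α : Matrix ι ι ℤ) *ᵥ (fun k => (τ k g).toAdd) = fun i => (τ i (α g)).toAdd :=
  funext fun i => by
    simpa [mulVec, dotProduct, autMatrix_apply, mul_comm] using congrArg Multiplicative.toAdd
      (h.map_eq_prod_zpow ((τ i).comp α.toMonoidHom) g).symm

theorem innAut_le_ker_autMatrix (h : IsDualGenerators x τ) : innAut Γ ≤ h.autMatrix.ker := by
  rintro _ ⟨g, rfl⟩
  simp [h.mem_ker_autMatrix, h.toAdd_apply_generator]

/-- The matrix by which an outer automorphism acts on the coordinates `τ`. -/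
def outMatrix (h : IsDualGenerators x τ) : Out Γ →* GL ι ℤ :=
  QuotientGroup.lift (innAut Γ) h.autMatrix h.innAut_le_ker_autMatrix

end IsDualGenerators

theorem isDualGenerators_expSum : IsDualGenerators FreeGroup.of expSum where
  closure_range_eq_top := FreeGroup.closure_range_of _
  toAdd_apply_generator i j := by simp [expSum, eq_comm]

section Nielsen

open FreeGroup

theorem exists_forall_isCoherent (φ : MulAut (FreeGroup (Fin 2))) :
    ∃ g s, ∀ j, IsCoherent s (g * φ (of j) * g⁻¹) := by
  have hgen : Subgroup.closure {φ (of 0), φ (of 1)} = ⊤ := by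
    have hrange : φ '' Set.range of = {φ (of 0), φ (of 1)} := by
      ext
      simp [Fin.exists_fin_two, eq_comm]
    have hmap := MonoidHom.map_closure φ.toMonoidHom (Set.range of)
    rw [closure_range_of, Subgroup.map_top_of_surjective _ φ.surjective] at hmap
    exact hrange ▸ hmap.symm
  obtain ⟨g, s, hc⟩ := (thetaGenerates_pair.2 hgen).thetaCoherent
  exact ⟨g, s, Fin.forall_fin_two.2 ⟨by simpa using hc 0 2, by simpa using hc 1 2⟩⟩

/-- **Nielsen's theorem** in rank two. -/
theorem ker_autMatrix_expSum :
    isDualGenerators_expSum.autMatrix.ker = innAut (FreeGroup (Fin 2)) := by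
  refine le_antisymm (fun φ hφ => ?_) isDualGenerators_expSum.innAut_le_ker_autMatrix
  obtain ⟨g, s, hc⟩ := exists_forall_isCoherent φ
  have hσ : ∀ i j, σ i (g * φ (of j) * g⁻¹) = if i = j then 1 else 0 := fun i j => by
    rw [← isDualGenerators_expSum.mem_ker_autMatrix.1 hφ i j]
    simp [σ]
  have hconj : (MulAut.conj g * φ).toMonoidHom = MonoidHom.id _ :=
    FreeGroup.ext_hom _ _ fun j => (hc j).eq_of (hσ · j)
  refine ⟨g⁻¹, ?_⟩
  rw [_root_.map_inv, inv_eq_iff_mul_eq_one]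
  exact MulEquiv.toMonoidHom_injective hconj

end Nielsen

/-! ### Residually finite and virtually cyclic groups -/

section ResiduallyFinite

variable {G H : Type*} [Group G] [Group H]

theorem residuallyFinite_iff_group : ResiduallyFinite G ↔ Group.ResiduallyFinite G := by
  rw [Group.residuallyFinite_iff_exists_finiteIndexNormalSubgroup]
  refine forall₂_congr fun g _ => ⟨fun ⟨N, _, _, hg⟩ => ?_, fun ⟨N, hg⟩ => ?_⟩
  · have := N.finiteIndex_of_finite_quotient
    exact ⟨.ofSubgroup N, hg⟩
  · have := N.isFiniteIndex'
    exact ⟨N.toSubgroup, N.isNormal', inferInstance, hg⟩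

theorem residuallyFinite_of_injective (f : G →* H) (hf : Function.Injective f)
    [Group.ResiduallyFinite H] : Group.ResiduallyFinite G := by
  rw [Group.residuallyFinite_iff_forall_finiteIndexNormalSubgroup]
  intro g hg
  exact (map_eq_one_iff f hf).1
    (Group.eq_one_iff_forall_finiteIndexNormalSubroup _ fun K => hg (K.comap f))

theorem residuallyFinite_of_finiteIndex (K : Subgroup G) [K.FiniteIndex]
    [Group.ResiduallyFinite K] : Group.ResiduallyFinite G := by
  rw [Group.residuallyFinite_iff_exists_finiteIndex]
  intro g hg
  by_cases hgK : g ∈ K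
  · obtain ⟨N, _, hN⟩ := Group.residuallyFinite_iff_exists_finiteIndex.1 ‹Group.ResiduallyFinite K›
      ⟨g, hgK⟩ (by simpa [Subtype.ext_iff] using hg)
    refine ⟨N.map K.subtype, ?_, by simpa [hgK] using hN⟩
    rw [Subgroup.finiteIndex_iff, Subgroup.index_map_subtype]
    exact mul_ne_zero Subgroup.FiniteIndex.index_ne_zero Subgroup.FiniteIndex.index_ne_zero
  · exact ⟨K, ‹_›, hgK⟩

theorem intCast_zmod_natAbs_add_one_ne_zero {d : ℤ} (hd : d ≠ 0) :
    (d : ZMod (d.natAbs + 1)) ≠ 0 := by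
  rw [Ne, ZMod.intCast_zmod_eq_zero_iff_dvd, Int.natCast_dvd]
  exact Nat.not_dvd_of_pos_of_lt (Int.natAbs_pos.2 hd) (Nat.lt_succ_self _)

theorem residuallyFinite_multiplicative_int : Group.ResiduallyFinite (Multiplicative ℤ) :=
  Group.residuallyFinite_of_forall_exists_finite_monoidHom fun d hd =>
    ⟨Multiplicative (ZMod (d.toAdd.natAbs + 1)), inferInstance, inferInstance,
      (Int.castAddHom _).toMultiplicative, intCast_zmod_natAbs_add_one_ne_zero hd⟩

theorem residuallyFinite_of_isCyclic [hG : IsCyclic G] : Group.ResiduallyFinite G := by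
  cases finite_or_infinite G
  · infer_instance
  · have e := zmodCyclicMulEquiv hG
    rw [Nat.card_eq_zero_of_infinite] at e
    have : Group.ResiduallyFinite (Multiplicative (ZMod 0)) := residuallyFinite_multiplicative_int
    exact residuallyFinite_of_injective e.symm.toMonoidHom e.symm.injective

theorem residuallyFinite_generalLinearGroup_int {n : Type*} [Fintype n] [DecidableEq n] :
    Group.ResiduallyFinite (GL n ℤ) := by
  refine Group.residuallyFinite_of_forall_exists_finite_monoidHom fun A hA => ?_
  obtain ⟨i, j, hij⟩ : ∃ i j, A i j ≠ (1 : Matrix n n ℤ) i j := by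
    by_contra! h
    exact hA (Matrix.GeneralLinearGroup.ext h)
  refine ⟨GL n (ZMod ((A i j - (1 : Matrix n n ℤ) i j).natAbs + 1)), inferInstance, inferInstance,
    Matrix.GeneralLinearGroup.map (Int.castRingHom _), fun h => ?_⟩
  refine intCast_zmod_natAbs_add_one_ne_zero (sub_ne_zero.2 hij) ?_
  have hmod := (Matrix.GeneralLinearGroup.ext_iff _ _).1 h i j
  rw [Matrix.GeneralLinearGroup.map_apply, eq_intCast] at hmod
  rw [Int.cast_sub, hmod, sub_eq_zero, Units.val_one, Matrix.one_apply, Matrix.one_apply,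
    Int.cast_ite, Int.cast_one, Int.cast_zero]

end ResiduallyFinite

section VirtuallyCyclic

variable {Γ Δ : Type*} [Group Γ] [Group Δ]

theorem isCyclic_range_of_ker_le {C : Type*} [Group C] [IsCyclic C] (q : Γ →* Δ) (c : Γ →* C)
    (h : c.ker ≤ q.ker) : IsCyclic q.range := by
  have : IsCyclic (Γ ⧸ c.ker) :=
    isCyclic_of_injective (QuotientGroup.kerLift c) (QuotientGroup.kerLift_injective c)
  refine isCyclic_of_surjective
    (QuotientGroup.lift c.ker q.rangeRestrict (by rwa [MonoidHom.ker_rangeRestrict])) ?_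
  exact QuotientGroup.lift_surjective_of_surjective _ _ q.rangeRestrict_surjective _

theorem exists_finiteIndex_isCyclic {C : Type*} [Group C] [IsCyclic C] (q : Γ →* Δ)
    [q.range.FiniteIndex] (K : Subgroup Γ) [K.FiniteIndex] (c : K →* C)
    (h : ∀ k, c k = 1 → q k = 1) : ∃ H : Subgroup Δ, H.FiniteIndex ∧ IsCyclic H := by
  refine ⟨K.map q, ?_, ?_⟩
  · have : (K ⊔ q.ker).FiniteIndex := Subgroup.finiteIndex_of_le le_sup_left
    rw [Subgroup.finiteIndex_iff, Subgroup.index_map]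
    exact mul_ne_zero Subgroup.FiniteIndex.index_ne_zero Subgroup.FiniteIndex.index_ne_zero
  · rw [← K.range_subtype, ← MonoidHom.range_comp]
    exact isCyclic_range_of_ker_le _ c fun k hk => h k hk

end VirtuallyCyclic

section Unipotent

open Matrix

variable {Γ : Type*} [Group Γ]

theorem exists_unipotent_of_triangular (T : Γ →* GL (Fin 2) ℤ) (hT : ∀ g, T g 1 0 = 0) :
    ∃ K : Subgroup Γ, K.FiniteIndex ∧ ∃ c : K →* Multiplicative ℤ, ∀ k, c k = 1 → T k = 1 := by
  have hmul : ∀ g h i j, T (g * h) i j = T g i 0 * T h 0 j + T g i 1 * T h 1 j := by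
    intro g h i j
    rw [map_mul, Units.val_mul, mul_apply, Fin.sum_univ_two]
  let diag (i : Fin 2) : Γ →* ℤ :=
    { toFun g := T g i i
      map_one' := by simp
      map_mul' g h := by
        rw [hmul]
        fin_cases i <;> simp [hT] }
  let signs : Γ →* (Fin 2 → ℤˣ) := MonoidHom.pi fun i => (diag i).toHomUnits
  have hdiag : ∀ (k : signs.ker) i, T k i i = 1 := fun k i =>
    congrArg Units.val (congrFun (MonoidHom.mem_ker.1 k.2) i)
  refine ⟨signs.ker, inferInstance, ⟨⟨fun k => .ofAdd (T k 0 1), by simp⟩, fun g h => ?_⟩,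
    fun k hk => GeneralLinearGroup.ext fun i j => ?_⟩
  · simp only [Subgroup.coe_mul, hmul, hdiag, ← ofAdd_add, one_mul, mul_one, add_comm]
  · have h01 : T k 0 1 = 0 := hk
    fin_cases i <;> fin_cases j
    exacts [hdiag k 0, h01, hT k, hdiag k 1]

theorem exists_eq_smul_SL2_col {v : Fin 2 → ℤ} (hv : v ≠ 0) :
    ∃ (d : ℤ) (P : SpecialLinearGroup (Fin 2) ℤ), d ≠ 0 ∧ v = d • fun i => P i 0 := by
  have hpos : 0 < Int.gcd (v 0) (v 1) := by
    rw [Int.gcd_pos_iff]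
    contrapose! hv
    exact funext (Fin.forall_fin_two.2 hv)
  obtain ⟨p, q, hpq, hp, hq⟩ := Int.exists_gcd_one hpos
  obtain ⟨P, rfl, rfl⟩ := (Int.isCoprime_iff_gcd_eq_one.2 hpq).exists_SL2_col 0
  refine ⟨Int.gcd (v 0) (v 1), P, by exact_mod_cast hpos.ne', funext (Fin.forall_fin_two.2 ?_)⟩
  exact ⟨hp.trans (mul_comm _ _), hq.trans (mul_comm _ _)⟩

theorem exists_unipotent_of_invariant_line (T : Γ →* GL (Fin 2) ℤ) {v : Fin 2 → ℤ} (hv : v ≠ 0)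
    (hT : ∀ g, v 0 * ((T g : Matrix (Fin 2) (Fin 2) ℤ) *ᵥ v) 1 =
      v 1 * ((T g : Matrix (Fin 2) (Fin 2) ℤ) *ᵥ v) 0) :
    ∃ K : Subgroup Γ, K.FiniteIndex ∧ ∃ c : K →* Multiplicative ℤ, ∀ k, c k = 1 → T k = 1 := by
  obtain ⟨d, P, hd, rfl⟩ := exists_eq_smul_SL2_col hv
  let c := MulAut.conj (P : GL (Fin 2) ℤ)⁻¹
  have hT' : ∀ g, c (T g) 1 0 = 0 := fun g => by
    have hcol : P 0 0 * ((T g).1 *ᵥ fun i => P i 0) 1 = P 1 0 * ((T g).1 *ᵥ fun i => P i 0) 0 := by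
      refine mul_left_cancel₀ (mul_ne_zero hd hd) ?_
      have hg := hT g
      simp only [mulVec_smul, Pi.smul_apply, smul_eq_mul] at hg
      linear_combination hg
    have hval : (c (T g)).1 = adjugate P.1 * (T g).1 * P.1 := rfl
    simp only [mulVec, dotProduct, Fin.sum_univ_two] at hcol
    simp only [hval, mul_apply, Fin.sum_univ_two, adjugate_fin_two, of_apply, cons_val]
    linear_combination hcol
  obtain ⟨K, hK, f, hf⟩ := exists_unipotent_of_triangular (c.toMonoidHom.comp T) hT'
  exact ⟨K, hK, f, fun k hk => (map_eq_one_iff c c.injective).1 (hf k hk)⟩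

end Unipotent

/-! ### Nielsen classes and induced automorphisms -/

theorem zpow_sum_eq_prod_zpow {ι A : Type*} [CommGroup A] (a : A) (s : Finset ι) (f : ι → ℤ) :
    a ^ ∑ i ∈ s, f i = ∏ i ∈ s, a ^ f i :=
  Finset.sum_smul (R := ℤ) (M := Additive A) (x := Additive.ofMul a)

theorem zpow_det_eq_one {ι A : Type*} [Fintype ι] [DecidableEq ι] [CommGroup A]
    {M : Matrix ι ι ℤ} {a : ι → A} (h : ∀ i, ∏ j, a j ^ M i j = 1) (j : ι) : a j ^ M.det = 1 := by
  calc a j ^ M.det = ∏ k, a k ^ (M.adjugate * M) j k := by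
        simp [Matrix.adjugate_mul, Matrix.one_apply]
    _ = ∏ k, ∏ i, (a k ^ M i k) ^ M.adjugate j i := by
        simp_rw [Matrix.mul_apply, zpow_sum_eq_prod_zpow, ← zpow_mul']
    _ = ∏ i, (∏ k, a k ^ M i k) ^ M.adjugate j i := by
        rw [Finset.prod_comm]
        simp_rw [Finset.prod_zpow]
    _ = 1 := by simp_rw [h, one_zpow, Finset.prod_const_one]

theorem IsDualGenerators.det_eq_zero_of_infinite {ι Γ A : Type*} [Fintype ι] [DecidableEq ι]
    [Group Γ] [CommGroup A] [Infinite A] {x : ι → Γ} {τ : ι → Γ →* Multiplicative ℤ}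
    (h : IsDualGenerators x τ) {f : Γ →* A} (hf : Function.Surjective f) {u : ι → Γ}
    (hu : ∀ i, f (u i) = 1) : (Matrix.of fun i j => (τ j (u i)).toAdd).det = 0 := by
  by_contra hdet
  have htors : IsMulTorsion A := fun y => by
    obtain ⟨g, rfl⟩ := hf y
    refine isOfFinOrder_iff_zpow_eq_one.2 ⟨_, hdet, ?_⟩
    simp_rw [h.map_eq_prod_zpow f g, ← Finset.prod_zpow, zpow_comm _ (Multiplicative.toAdd _)]
    have hx := zpow_det_eq_one (M := .of fun i j => (τ j (u i)).toAdd)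
      fun i => (h.map_eq_prod_zpow f (u i)).symm.trans (hu i)
    simp_rw [hx, one_zpow, Finset.prod_const_one]
  have : Group.FG Γ := Group.fg_iff.2 ⟨_, h.closure_range_eq_top, Set.finite_range x⟩
  have : Group.FG A := Group.fg_of_surjective hf
  have := CommGroup.finite_of_fg_isMulTorsion A htors
  exact not_finite A

namespace NielsenEquiv

variable {G : Type*} [Group G] {n : ℕ} {X Y Z : Fin n → G}

theorem iff_exists_comp : NielsenEquiv Y Z ↔ ∃ φ : MulAut (FreeGroup (Fin n)),
    (FreeGroup.lift Y).comp φ.toMonoidHom = FreeGroup.lift Z :=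
  exists_congr fun φ => ⟨fun h => FreeGroup.ext_hom _ _ fun i => by simpa using h i,
    fun h i => by simpa using DFunLike.congr_fun h (FreeGroup.of i)⟩

theorem refl (Y : Fin n → G) : NielsenEquiv Y Y := ⟨.refl _, fun i => by simp⟩

theorem symm (h : NielsenEquiv Y Z) : NielsenEquiv Z Y := by
  rw [iff_exists_comp] at h ⊢
  obtain ⟨φ, hφ⟩ := h
  refine ⟨φ⁻¹, MonoidHom.ext fun w => ?_⟩
  rw [← hφ]
  simp

theorem trans (h : NielsenEquiv X Y) (h' : NielsenEquiv Y Z) : NielsenEquiv X Z := by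
  rw [iff_exists_comp] at h h' ⊢
  obtain ⟨φ, hφ⟩ := h
  obtain ⟨ψ, hψ⟩ := h'
  exact ⟨φ * ψ, by rw [← hψ, ← hφ]; rfl⟩

end NielsenEquiv

/-- The pairs `(φ, ψ)` where the automorphism `φ` of the free group induces the automorphism `ψ` of
the presented group. -/
def inducedPairs {α : Type*} (rels : Set (FreeGroup α)) :
    Subgroup (MulAut (FreeGroup α) × MulAut (PresentedGroup rels)) where
  carrier := {p | ∀ w, p.2 (PresentedGroup.mk rels w) = PresentedGroup.mk rels (p.1 w)}
  one_mem' _ := rfl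
  mul_mem' {p q} hp hq w := (congrArg p.2 (hq w)).trans (hp (q.1 w))
  inv_mem' {p} hp w := by
    rw [Prod.snd_inv, Prod.fst_inv, MulAut.inv_apply, MulEquiv.symm_apply_eq, hp,
      MulAut.apply_inv_self]

/-- The outer class of the automorphism of the presented group in an induced pair. -/
def inducedOut {α : Type*} (rels : Set (FreeGroup α)) :
    inducedPairs rels →* Out (PresentedGroup rels) :=
  (QuotientGroup.mk' (innAut _)).comp ((MonoidHom.snd _ _).comp (inducedPairs rels).subtype)

theorem inducedOut_eq_one_of_mem_innAut {α : Type*} {rels : Set (FreeGroup α)}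
    {p : inducedPairs rels} (hp : p.1.1 ∈ innAut (FreeGroup α)) : inducedOut rels p = 1 := by
  obtain ⟨g, hg⟩ := hp
  refine (QuotientGroup.eq_one_iff _).2 ⟨PresentedGroup.mk rels g, MulEquiv.ext fun y => ?_⟩
  obtain ⟨w, rfl⟩ := PresentedGroup.mk_surjective rels y
  refine Eq.trans ?_ (p.2 w).symm
  simp [← hg]

theorem finiteIndex_of_forall_inv_mul_mem {Γ X : Type*} [Group Γ] [Finite X] {H : Subgroup Γ}
    (f : Γ → X) (hf : ∀ a b, f a = f b → a⁻¹ * b ∈ H) : H.FiniteIndex := by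
  have hinj : Function.Injective fun x : Γ ⧸ H => f x.out := fun x y hxy => by
    rw [← x.out_eq', ← y.out_eq', QuotientGroup.eq]
    exact hf _ _ hxy
  have := Finite.of_injective _ hinj
  exact Subgroup.finiteIndex_of_finite_quotient

section NielsenClasses

variable {n : ℕ} {rels : Set (FreeGroup (Fin n))}

theorem exists_mem_inducedPairs_of_nielsenEquiv {β γ : MulAut (PresentedGroup rels)}
    (h : NielsenEquiv (fun i => β (.of i)) (fun i => γ (.of i))) :
    ∃ φ, (φ, β⁻¹ * γ) ∈ inducedPairs rels := by
  obtain ⟨φ, hφ⟩ := NielsenEquiv.iff_exists_comp.1 h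
  have hlift : ∀ β : MulAut (PresentedGroup rels),
      FreeGroup.lift (fun i => β (.of i)) = β.toMonoidHom.comp (PresentedGroup.mk rels) :=
    fun β => FreeGroup.ext_hom _ _ fun i => by simp [PresentedGroup.of]
  rw [hlift, hlift] at hφ
  refine ⟨φ, fun w => ?_⟩
  rw [MulAut.mul_apply, MulAut.inv_apply, MulEquiv.symm_apply_eq]
  exact (DFunLike.congr_fun hφ w).symm

theorem finiteIndex_range_inducedOut
    (hfin : Finite (Quot fun Y Z : {Y : Fin n → PresentedGroup rels //
      SameTSystem (fun i => (PresentedGroup.of i : PresentedGroup rels)) Y} =>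
      NielsenEquiv Y.1 Z.1)) : (inducedOut rels).range.FiniteIndex := by
  let R (Y Z : {Y : Fin n → PresentedGroup rels //
      SameTSystem (fun i => (PresentedGroup.of i : PresentedGroup rels)) Y}) : Prop :=
    NielsenEquiv Y.1 Z.1
  have hR : Equivalence R := ⟨fun _ => .refl _, .symm, .trans⟩
  refine finiteIndex_of_forall_inv_mul_mem (fun g : Out (PresentedGroup rels) =>
    Quot.mk R ⟨fun i => g.out (.of i), g.out, .refl _⟩) fun a b hab => ?_
  have hnielsen : NielsenEquiv (fun i => a.out (.of i)) (fun i => b.out (.of i)) :=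
    hR.eqvGen_iff.1 (Quot.eqvGen_exact hab)
  obtain ⟨φ, hφ⟩ := exists_mem_inducedPairs_of_nielsenEquiv hnielsen
  refine ⟨⟨_, hφ⟩, (QuotientGroup.mk_mul _ _ _).trans ?_⟩
  rw [QuotientGroup.mk_inv, QuotientGroup.out_eq', QuotientGroup.out_eq']

end NielsenClasses

section RankTwoPresentation

variable {rels : Set (FreeGroup (Fin 2))}

/-- The action on exponent sums of the automorphism of the free group in an induced pair. -/
noncomputable def inducedMatrix (rels : Set (FreeGroup (Fin 2))) :
    inducedPairs rels →* GL (Fin 2) ℤ :=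
  isDualGenerators_expSum.autMatrix.comp ((MonoidHom.fst _ _).comp (inducedPairs rels).subtype)

theorem inducedOut_eq_one_of_inducedMatrix_eq_one {p : inducedPairs rels}
    (hp : inducedMatrix rels p = 1) : inducedOut rels p = 1 :=
  inducedOut_eq_one_of_mem_innAut (ker_autMatrix_expSum ▸ hp)

theorem exists_comp_inducedOut_eq_inducedMatrix
    (h : rels ⊆ ↑(commutator (FreeGroup (Fin 2)))) :
    ∃ ρ : Out (PresentedGroup rels) →* GL (Fin 2) ℤ,
      ρ.comp (inducedOut rels) = inducedMatrix rels := by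
  have hrels : ∀ i, ∀ r ∈ rels, expSum i r = 1 := fun i r hr =>
    isDualGenerators_expSum.mem_commutator_iff.1 (h hr) i
  have hdual : IsDualGenerators (PresentedGroup.of (rels := rels))
      fun i => PresentedGroup.toGroup (hrels i) :=
    ⟨PresentedGroup.closure_range_of _, isDualGenerators_expSum.toAdd_apply_generator⟩
  refine ⟨hdual.outMatrix, MonoidHom.ext fun p => Matrix.GeneralLinearGroup.ext fun i j => ?_⟩
  exact congrArg (fun y => (PresentedGroup.toGroup (hrels i) y).toAdd) (p.2 (.of j))

theorem residuallyFinite_out (h : rels ⊆ ↑(commutator (FreeGroup (Fin 2))))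
    [(inducedOut rels).range.FiniteIndex] : ResiduallyFinite (Out (PresentedGroup rels)) := by
  obtain ⟨ρ, hρ⟩ := exists_comp_inducedOut_eq_inducedMatrix h
  have hinj : Function.Injective (ρ.comp (inducedOut rels).range.subtype) := by
    refine (injective_iff_map_eq_one _).2 ?_
    rintro ⟨_, p, rfl⟩ hp
    exact Subtype.ext
      (inducedOut_eq_one_of_inducedMatrix_eq_one ((DFunLike.congr_fun hρ p).symm.trans hp))
  have := residuallyFinite_generalLinearGroup_int (n := Fin 2)
  have := residuallyFinite_of_injective _ hinj
  exact residuallyFinite_iff_group.2 (residuallyFinite_of_finiteIndex (inducedOut rels).range)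

theorem σ_mul_σ_eq_of_mk_eq_one [Infinite (Abelianization (PresentedGroup rels))]
    {u w : FreeGroup (Fin 2)} (hu : PresentedGroup.mk rels u = 1)
    (hw : PresentedGroup.mk rels w = 1) : σ 0 u * σ 1 w = σ 1 u * σ 0 w := by
  have hsurj : Function.Surjective (Abelianization.of.comp (PresentedGroup.mk rels)) :=
    (QuotientGroup.mk'_surjective _).comp (PresentedGroup.mk_surjective rels)
  have hdet := isDualGenerators_expSum.det_eq_zero_of_infinite hsurj (u := ![u, w])
    (Fin.forall_fin_two.2 ⟨by simp [hu], by simp [hw]⟩)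
  rw [Matrix.det_fin_two] at hdet
  exact sub_eq_zero.1 hdet

theorem exists_finiteIndex_isCyclic_out [Infinite (Abelianization (PresentedGroup rels))]
    (h : ¬rels ⊆ ↑(commutator (FreeGroup (Fin 2)))) [(inducedOut rels).range.FiniteIndex] :
    ∃ H : Subgroup (Out (PresentedGroup rels)), H.FiniteIndex ∧ IsCyclic H := by
  obtain ⟨r, hr, hrc⟩ := Set.not_subset.1 h
  have hr1 : PresentedGroup.mk rels r = 1 := PresentedGroup.one_of_mem hr
  have hσ : (fun i => σ i r) ≠ 0 := fun h0 =>
    hrc (isDualGenerators_expSum.mem_commutator_iff.2 (congrFun h0))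
  obtain ⟨K, _, c, hc⟩ := exists_unipotent_of_invariant_line (inducedMatrix rels) hσ fun p => by
    have hp : PresentedGroup.mk rels (p.1.1 r) = 1 := by rw [← p.2, hr1, map_one]
    have hmulVec := isDualGenerators_expSum.autMatrix_mulVec p.1.1 r
    exact hmulVec ▸ σ_mul_σ_eq_of_mk_eq_one hr1 hp
  exact exists_finiteIndex_isCyclic (inducedOut rels) K c fun k hk =>
    inducedOut_eq_one_of_inducedMatrix_eq_one (hc k hk)

end RankTwoPresentation

theorem statement_19 (rels : Set (FreeGroup (Fin 2)))
    (hab : Infinite (Abelianization (PresentedGroup rels)))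
    (hfin : Finite (Quot (fun (Y Z : {Y : Fin 2 → PresentedGroup rels //
      SameTSystem (fun i => (PresentedGroup.of i : PresentedGroup rels)) Y}) =>
      NielsenEquiv Y.1 Z.1))) :
    ResiduallyFinite (Out (PresentedGroup rels)) ∧
      (¬ rels ⊆ ↑(commutator (FreeGroup (Fin 2))) →
        ∃ H : Subgroup (Out (PresentedGroup rels)), H.FiniteIndex ∧ IsCyclic H) := by
  have := finiteIndex_range_inducedOut hfin
  refine ⟨?_, fun h => exists_finiteIndex_isCyclic_out h⟩
  by_cases h : rels ⊆ ↑(commutator (FreeGroup (Fin 2)))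
  · exact residuallyFinite_out h
  · obtain ⟨H, _, _⟩ := exists_finiteIndex_isCyclic_out h
    have : Group.ResiduallyFinite H := residuallyFinite_of_isCyclic
    exact residuallyFinite_iff_group.2 (residuallyFinite_of_finiteIndex H)
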